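/- arXiv:2601.12059 — 6 statements merged into one kernel-verified Lean document; each statement's English description precedes it below -/
import Mathlib

section
/- Let E be an injective cogenerator for R-modules. Then an R-module T is almost zero if and only if the R-module Hom_R(T, E) is almost zero. -/
universe u

section

universe v w

open Module

theorem annihilator_le_annihilator_linearMap (R E T : Type*) [CommSemiring R]
    [AddCommMonoid E] [Module R E] [AddCommMonoid T] [Module R T] :
    annihilator R T ≤ annihilator R (T →ₗ[R] E) := by
  intro s hs
  refine mem_annihilator.mpr fun φ ↦ LinearMap.ext fun x ↦ ?_
  calc s • φ x = φ (s • x) := (map_smul φ s x).symm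
    _ = 0 := by rw [mem_annihilator.mp hs x, map_zero]

theorem annihilator_linearMap_eq_of_applyₗ_injective {R E T : Type*} [CommSemiring R]
    [AddCommMonoid E] [Module R E] [AddCommMonoid T] [Module R T]
    (hT : Function.Injective (LinearMap.applyₗ : T →ₗ[R] (T →ₗ[R] E) →ₗ[R] E)) :
    annihilator R (T →ₗ[R] E) = annihilator R T := by
  refine le_antisymm ?_ (annihilator_le_annihilator_linearMap R E T)
  calc annihilator R (T →ₗ[R] E)
      ≤ annihilator R ((T →ₗ[R] E) →ₗ[R] E) := annihilator_le_annihilator_linearMap R E _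
    _ ≤ annihilator R T := LinearMap.annihilator_le_of_injective _ hT

/-- `E` is a cogenerator of `R`-modules: only the zero module has no nonzero map to `E`. The test
modules range over the universe of `E`, as they do in `Module.Injective`. -/
def IsCogenerator (R : Type w) [Ring R] (E : Type v) [AddCommGroup E] [Module R E] : Prop :=
  ∀ (T : Type v) [AddCommGroup T] [Module R T], (∀ φ : T →ₗ[R] E, φ = 0) → Subsingleton T

namespace IsCogenerator

theorem eq_zero_of_forall_apply_eq_zero {R : Type w} [Ring R] {E T : Type v} [AddCommGroup E]
    [Module R E] [Module.Injective R E] [AddCommGroup T] [Module R T] (hE : IsCogenerator R E)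
    {x : T} (hx : ∀ φ : T →ₗ[R] E, φ x = 0) : x = 0 := by
  have hom_span_eq_zero (φ : R ∙ x →ₗ[R] E) : φ = 0 := by
    obtain ⟨ψ, hψ⟩ := Module.Injective.out (R ∙ x).subtype (R ∙ x).subtype_injective φ
    ext ⟨y, hy⟩
    obtain ⟨r, rfl⟩ := Submodule.mem_span_singleton.mp hy
    rw [← hψ, Submodule.subtype_apply, map_smul, hx, smul_zero, LinearMap.zero_apply]
  have : Subsingleton (R ∙ x) := hE _ hom_span_eq_zero
  exact Submodule.span_singleton_eq_bot.mp (Submodule.subsingleton_iff_eq_bot.mp this)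

variable {R : Type w} [CommRing R] {E : Type v} [AddCommGroup E] [Module R E]
  [Module.Injective R E]

theorem applyₗ_injective (hE : IsCogenerator R E) (T : Type v) [AddCommGroup T] [Module R T] :
    Function.Injective (LinearMap.applyₗ : T →ₗ[R] (T →ₗ[R] E) →ₗ[R] E) :=
  (injective_iff_map_eq_zero _).mpr fun _ hx ↦
    hE.eq_zero_of_forall_apply_eq_zero (LinearMap.congr_fun hx)

theorem annihilator_linearMap_eq (hE : IsCogenerator R E) (T : Type v) [AddCommGroup T]
    [Module R T] : annihilator R (T →ₗ[R] E) = annihilator R T :=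
  annihilator_linearMap_eq_of_applyₗ_injective (hE.applyₗ_injective T)

end IsCogenerator

theorem almostZero_iff_hom_almostZero_general {R : Type w} [CommRing R] (S : Set R)
    {E : Type v} [AddCommGroup E] [Module R E] [Module.Injective R E] (hE : IsCogenerator R E)
    (T : Type v) [AddCommGroup T] [Module R T] :
    (∀ s ∈ S, ∀ x : T, s • x = 0) ↔ (∀ s ∈ S, ∀ φ : T →ₗ[R] E, s • φ = 0) := by
  simp only [← mem_annihilator, hE.annihilator_linearMap_eq T]

end

/-- For an injective cogenerator `E`, a module `T` is almost zero
iff `Hom_R(T, E)` is almost zero. -/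
theorem almostZero_iff_hom_almostZero
    {R : Type u} [CommRing R] (m : Ideal R) (hm : m * m = m)
    (E : Type u) [AddCommGroup E] [Module R E]
    (hEinj : Module.Injective R E)
    (hEcogen : ∀ (T : Type u) [AddCommGroup T] [Module R T],
      (∀ φ : T →ₗ[R] E, φ = 0) → Subsingleton T)
    (T : Type u) [AddCommGroup T] [Module R T] :
    (∀ s ∈ m, ∀ x : T, s • x = 0) ↔ (∀ s ∈ m, ∀ φ : T →ₗ[R] E, s • φ = 0) :=
  almostZero_iff_hom_almostZero_general (m : Set R) hEcogen T
end

section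
/- (Almost five lemma.) Consider a commutative diagram of R-modules with exact rows A → B → C → D → E and A' → B' → C' → D' → E', with vertical maps f_A, f_B, f_C, f_D, f_E. Then: (1) if f_B and f_D are almost injections and f_A is an almost surjection, then f_C is an almost injection; (2) if f_B and f_D are almost surjections and f_E is an almost injection, then f_C is an almost surjection; (3) consequently, if f_A is an almost surjection, f_E is an almost injection, and f_B and f_D are almost isomorphisms, then f_C is an almost isomorphism. -/
universe u

/-!
Run the diagram chases of the two four lemmas, and each time a hypothesis on a vertical map `f` is
invoked, first multiply the element at hand by a scalar killing the kernel or the cokernel of `f`.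
Each chase invokes three hypotheses, so its conclusion holds up to a product of three scalars. This
loses nothing when the scalars come from an idempotent ideal `m`, since then `m * m * m = m`.
-/

section AlmostMaps

variable {R M N : Type*} [CommRing R] [AddCommGroup M] [Module R M] [AddCommGroup N] [Module R N]

/-- Almost injections with respect to an ideal `I`: the kernel of `f` is killed by `I`. The ideal is
not required to be idempotent, so that the ideals arising in a diagram chase can be tracked
separately. -/
def AlmostInjective (I : Ideal R) (f : M →ₗ[R] N) : Prop :=
  ∀ s ∈ I, ∀ x ∈ LinearMap.ker f, s • x = 0

/-- Almost surjections with respect to an ideal `I`: the cokernel of `f` is killed by `I`, expressed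
as `I • N ⊆ range f` to avoid the quotient. As in `AlmostInjective`, the ideal is arbitrary. -/
def AlmostSurjective (I : Ideal R) (f : M →ₗ[R] N) : Prop :=
  ∀ s ∈ I, ∀ y : N, s • y ∈ LinearMap.range f

theorem smul_mem_of_mem_ideal_mul {I J : Ideal R} {P : Submodule R M} {x : M}
    (h : ∀ a ∈ I, ∀ b ∈ J, a • b • x ∈ P) {s : R} (hs : s ∈ I * J) : s • x ∈ P := by
  have hIJ : I * J ≤ P.colon {x} := Ideal.mul_le.2 fun a ha b hb ↦ by
    rw [Submodule.mem_colon_singleton, mul_smul]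
    exact h a ha b hb
  exact Submodule.mem_colon_singleton.1 (hIJ hs)

theorem smul_mem_of_mem_ideal_mul_mul {I J K : Ideal R} {P : Submodule R M} {x : M}
    (h : ∀ a ∈ I, ∀ b ∈ J, ∀ c ∈ K, a • b • c • x ∈ P) {s : R} (hs : s ∈ I * J * K) :
    s • x ∈ P :=
  smul_mem_of_mem_ideal_mul
    (fun _ hr c hc ↦ smul_mem_of_mem_ideal_mul (fun a ha b hb ↦ h a ha b hb c hc) hr) hs

end AlmostMaps

section FourLemmas

variable {R : Type*} [CommRing R] {I J K : Ideal R}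
  {A B C D E A' B' C' D' E' : Type*}
  [AddCommGroup A] [Module R A] [AddCommGroup B] [Module R B] [AddCommGroup C] [Module R C]
  [AddCommGroup D] [Module R D] [AddCommGroup E] [Module R E]
  [AddCommGroup A'] [Module R A'] [AddCommGroup B'] [Module R B'] [AddCommGroup C'] [Module R C']
  [AddCommGroup D'] [Module R D'] [AddCommGroup E'] [Module R E']
  {g₁ : A →ₗ[R] B} {g₂ : B →ₗ[R] C} {g₃ : C →ₗ[R] D} {g₄ : D →ₗ[R] E}
  {h₁ : A' →ₗ[R] B'} {h₂ : B' →ₗ[R] C'} {h₃ : C' →ₗ[R] D'} {h₄ : D' →ₗ[R] E'}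
  {fA : A →ₗ[R] A'} {fB : B →ₗ[R] B'} {fC : C →ₗ[R] C'} {fD : D →ₗ[R] D'} {fE : E →ₗ[R] E'}

theorem almostInjective_of_almostSurjective_of_almostInjective_of_almostInjective
    (hg₁₂ : g₂ ∘ₗ g₁ = 0) (hg₂₃ : Function.Exact g₂ g₃) (hh₁₂ : Function.Exact h₁ h₂)
    (hAB : fB ∘ₗ g₁ = h₁ ∘ₗ fA) (hBC : fC ∘ₗ g₂ = h₂ ∘ₗ fB) (hCD : fD ∘ₗ g₃ = h₃ ∘ₗ fC)
    (hfA : AlmostSurjective J fA) (hfB : AlmostInjective I fB) (hfD : AlmostInjective K fD) :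
    AlmostInjective (I * J * K) fC := by
  simp only [LinearMap.ext_iff, LinearMap.comp_apply, LinearMap.zero_apply] at hg₁₂ hAB hBC hCD
  intro s hs x hx
  rw [LinearMap.mem_ker] at hx
  refine (Submodule.mem_bot R).1 (smul_mem_of_mem_ideal_mul_mul (fun a ha b hb c hc ↦ ?_) hs)
  have hcx : g₃ (c • x) = 0 := by
    rw [map_smul]
    exact hfD c hc (g₃ x) (by rw [LinearMap.mem_ker, hCD, hx, map_zero])
  obtain ⟨y, hy⟩ : ∃ y, g₂ y = c • x := (hg₂₃ _).1 hcx
  obtain ⟨z', hz'⟩ : ∃ z', h₁ z' = fB y :=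
    (hh₁₂ _).1 (by rw [← hBC, hy, map_smul, hx, smul_zero])
  obtain ⟨z, hz⟩ : ∃ z, fA z = b • z' := hfA b hb z'
  have hker : b • y - g₁ z ∈ LinearMap.ker fB := by
    rw [LinearMap.mem_ker, map_sub, map_smul, hAB, hz, map_smul, hz', sub_self]
  rw [Submodule.mem_bot]
  calc
    a • b • c • x = g₂ (a • (b • y - g₁ z)) := by
      rw [map_smul, map_sub, map_smul, hy, hg₁₂, sub_zero]
    _ = 0 := by rw [hfB a ha _ hker, map_zero]

theorem almostSurjective_of_almostSurjective_of_almostSurjective_of_almostInjective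
    (hg₃₄ : Function.Exact g₃ g₄) (hh₂₃ : Function.Exact h₂ h₃) (hh₃₄ : h₄ ∘ₗ h₃ = 0)
    (hBC : fC ∘ₗ g₂ = h₂ ∘ₗ fB) (hCD : fD ∘ₗ g₃ = h₃ ∘ₗ fC) (hDE : fE ∘ₗ g₄ = h₄ ∘ₗ fD)
    (hfB : AlmostSurjective I fB) (hfD : AlmostSurjective K fD) (hfE : AlmostInjective J fE) :
    AlmostSurjective (I * J * K) fC := by
  simp only [LinearMap.ext_iff, LinearMap.comp_apply, LinearMap.zero_apply] at hh₃₄ hBC hCD hDE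
  refine fun s hs x' ↦ smul_mem_of_mem_ideal_mul_mul (fun a ha b hb c hc ↦ ?_) hs
  obtain ⟨w, hw⟩ : ∃ w, fD w = c • h₃ x' := hfD c hc (h₃ x')
  have hbw : g₄ (b • w) = 0 := by
    rw [map_smul]
    exact hfE b hb (g₄ w) (by rw [LinearMap.mem_ker, hDE, hw, map_smul, hh₃₄, smul_zero])
  obtain ⟨x, hx⟩ : ∃ x, g₃ x = b • w := (hg₃₄ _).1 hbw
  have hdiff : h₃ (b • c • x' - fC x) = 0 := by
    rw [map_sub, ← hCD, hx, map_smul, map_smul, map_smul, hw, sub_self]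
  obtain ⟨y', hy'⟩ : ∃ y', h₂ y' = b • c • x' - fC x := (hh₂₃ _).1 hdiff
  obtain ⟨y, hy⟩ : ∃ y, fB y = a • y' := hfB a ha y'
  refine ⟨g₂ y + a • x, ?_⟩
  calc
    fC (g₂ y + a • x) = a • (b • c • x' - fC x) + a • fC x := by
      rw [map_add, hBC, hy, map_smul, map_smul, hy']
    _ = a • b • c • x' := by rw [← smul_add, sub_add_cancel]

end FourLemmas

/-- The almost five lemma. -/
theorem almost_five_lemma
    {R : Type u} [CommRing R] (m : Ideal R) (hm : m * m = m)
    {A B C D E A' B' C' D' E' : Type u}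
    [AddCommGroup A] [Module R A] [AddCommGroup B] [Module R B] [AddCommGroup C] [Module R C]
    [AddCommGroup D] [Module R D] [AddCommGroup E] [Module R E]
    [AddCommGroup A'] [Module R A'] [AddCommGroup B'] [Module R B'] [AddCommGroup C'] [Module R C']
    [AddCommGroup D'] [Module R D'] [AddCommGroup E'] [Module R E']
    (g₁ : A →ₗ[R] B) (g₂ : B →ₗ[R] C) (g₃ : C →ₗ[R] D) (g₄ : D →ₗ[R] E)
    (h₁ : A' →ₗ[R] B') (h₂ : B' →ₗ[R] C') (h₃ : C' →ₗ[R] D') (h₄ : D' →ₗ[R] E')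
    (fA : A →ₗ[R] A') (fB : B →ₗ[R] B') (fC : C →ₗ[R] C') (fD : D →ₗ[R] D') (fE : E →ₗ[R] E')
    (hrow₁B : Function.Exact g₁ g₂) (hrow₁C : Function.Exact g₂ g₃)
    (hrow₁D : Function.Exact g₃ g₄)
    (hrow₂B : Function.Exact h₁ h₂) (hrow₂C : Function.Exact h₂ h₃)
    (hrow₂D : Function.Exact h₃ h₄)
    (hc₁ : fB ∘ₗ g₁ = h₁ ∘ₗ fA) (hc₂ : fC ∘ₗ g₂ = h₂ ∘ₗ fB)
    (hc₃ : fD ∘ₗ g₃ = h₃ ∘ₗ fC) (hc₄ : fE ∘ₗ g₄ = h₄ ∘ₗ fD) :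
    -- (1)
    (((∀ s ∈ m, ∀ x ∈ LinearMap.ker fB, s • x = 0) →
        (∀ s ∈ m, ∀ x ∈ LinearMap.ker fD, s • x = 0) →
        (∀ s ∈ m, ∀ y : A', s • y ∈ LinearMap.range fA) →
        ∀ s ∈ m, ∀ x ∈ LinearMap.ker fC, s • x = 0) ∧
    -- (2)
    ((∀ s ∈ m, ∀ y : B', s • y ∈ LinearMap.range fB) →
        (∀ s ∈ m, ∀ y : D', s • y ∈ LinearMap.range fD) →
        (∀ s ∈ m, ∀ x ∈ LinearMap.ker fE, s • x = 0) →
        ∀ s ∈ m, ∀ y : C', s • y ∈ LinearMap.range fC) ∧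
    -- (3)
    ((∀ s ∈ m, ∀ y : A', s • y ∈ LinearMap.range fA) →
        (∀ s ∈ m, ∀ x ∈ LinearMap.ker fE, s • x = 0) →
        ((∀ s ∈ m, ∀ x ∈ LinearMap.ker fB, s • x = 0) ∧
          (∀ s ∈ m, ∀ y : B', s • y ∈ LinearMap.range fB)) →
        ((∀ s ∈ m, ∀ x ∈ LinearMap.ker fD, s • x = 0) ∧
          (∀ s ∈ m, ∀ y : D', s • y ∈ LinearMap.range fD)) →
        ((∀ s ∈ m, ∀ x ∈ LinearMap.ker fC, s • x = 0) ∧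
          (∀ s ∈ m, ∀ y : C', s • y ∈ LinearMap.range fC)))) := by
  have hmmm : m * m * m = m := by rw [hm, hm]
  have injective (hfB : AlmostInjective m fB) (hfD : AlmostInjective m fD)
      (hfA : AlmostSurjective m fA) : AlmostInjective m fC :=
    hmmm ▸ almostInjective_of_almostSurjective_of_almostInjective_of_almostInjective
      hrow₁B.linearMap_comp_eq_zero hrow₁C hrow₂B hc₁ hc₂ hc₃ hfA hfB hfD
  have surjective (hfB : AlmostSurjective m fB) (hfD : AlmostSurjective m fD)
      (hfE : AlmostInjective m fE) : AlmostSurjective m fC :=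
    hmmm ▸ almostSurjective_of_almostSurjective_of_almostSurjective_of_almostInjective
      hrow₁D hrow₂C hrow₂D.linearMap_comp_eq_zero hc₂ hc₃ hc₄ hfB hfD hfE
  exact ⟨injective, surjective, fun hfA hfE hfB hfD ↦
    ⟨injective hfB.1 hfD.1 hfA, surjective hfB.2 hfD.2 hfE⟩⟩
end

section
/- Let 0 → A →f B →g C → 0 be a short exact sequence of R-modules. Then the following are equivalent: (1) the sequence is almost pure; (2) for every finitely presented R-module M, the kernel of the induced map M ⊗_R A → M ⊗_R B is almost zero; (3) for every finitely presented R-module N, every R-linear map γ : N → C, and every s ∈ m, there exists an R-linear map δ : N → B with g ∘ δ = s·γ. -/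
universe u

/-- A short exact sequence `0 → A →f B → C → 0` is almost pure if for every module `M`
the kernel of `M ⊗ A → M ⊗ B` is almost zero. -/
def IsAlmostPure {R : Type u} [CommRing R] (m : Ideal R)
    {A B : Type u} [AddCommGroup A] [Module R A] [AddCommGroup B] [Module R B]
    (f : A →ₗ[R] B) : Prop :=
  ∀ (M : Type u) [AddCommGroup M] [Module R M],
    ∀ s ∈ m, ∀ x ∈ LinearMap.ker (LinearMap.lTensor M f), s • x = 0

/-!
The scalars `s ∈ m` are treated one at a time, through the equational form of purity: if a finite
linear system over `R` with right-hand sides `f (a i)`, `a i ∈ A`, has a solution in `B`, then the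
system with right-hand sides `s • a i` has a solution in `A`. Let `D` be the coefficient matrix,
with one row per equation. The systems with matrix `D` solvable in `B` yield elements of the kernel
of `M ⊗ A → M ⊗ B`, where `M` is the quotient of a free module by the columns of `D`, and maps
`N → C`, where `N` is the quotient by the rows. A solution in `A` of the system scaled by `s` is
exactly what makes `s` kill the element, respectively what makes `s` times the map lift to `B`.
-/

open TensorProduct LinearMap

section

variable {R M A B : Type*} [CommRing R] [AddCommGroup M] [Module R M]
  [AddCommGroup A] [Module R A] [AddCommGroup B] [Module R B]

theorem exists_eq_sum_tmul_of_span_range_eq_top {ι : Type*} [Fintype ι] {v : ι → M}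
    (hv : Submodule.span R (Set.range v) = ⊤) (x : M ⊗[R] A) :
    ∃ a : ι → A, x = ∑ i, v i ⊗ₜ[R] a i := by
  induction x with
  | zero => exact ⟨0, by simp⟩
  | tmul y z =>
    obtain ⟨c, rfl⟩ := (Submodule.mem_span_range_iff_exists_fun R).1
      (hv ▸ Submodule.mem_top (x := y))
    exact ⟨fun i => c i • z, by simp only [sum_tmul, smul_tmul]⟩
  | add x y hx hy =>
    obtain ⟨a, rfl⟩ := hx
    obtain ⟨b, rfl⟩ := hy
    exact ⟨a + b, by simp only [Pi.add_apply, tmul_add, Finset.sum_add_distrib]⟩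

theorem exists_fg_lTensor_eq_zero {f : A →ₗ[R] B} {x : M ⊗[R] A} (hx : lTensor M f x = 0) :
    ∃ (Q : Submodule R M) (y : Q ⊗[R] A),
      Q.FG ∧ rTensor A Q.subtype y = x ∧ lTensor Q f y = 0 := by
  obtain ⟨P, hP, t, rfl⟩ := TensorProduct.exists_of_fg x
  rw [← comp_apply, lTensor_comp_rTensor, ← rTensor_comp_lTensor, comp_apply] at hx
  obtain ⟨Q, hPQ, hQ, ht⟩ := TensorProduct.eq_zero_of_fg_of_subtype_eq_zero hP hx
  refine ⟨Q, rTensor A (Submodule.inclusion hPQ) t, hQ, ?_, ?_⟩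
  · rw [← comp_apply, ← rTensor_comp, Submodule.subtype_comp_inclusion]
  · rw [← comp_apply, lTensor_comp_rTensor, ← rTensor_comp_lTensor, comp_apply, ht]

theorem exists_eq_sum_tmul_vanishesTrivially {f : A →ₗ[R] B} {x : M ⊗[R] A}
    (hx : lTensor M f x = 0) :
    ∃ (n : ℕ) (v : Fin n → M) (a : Fin n → A),
      x = ∑ i, v i ⊗ₜ[R] a i ∧ VanishesTrivially R v (f ∘ a) := by
  obtain ⟨Q, y, hQ, rfl, hy⟩ := exists_fg_lTensor_eq_zero hx
  have : Module.Finite R Q := Module.Finite.iff_fg.2 hQ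
  obtain ⟨n, v, hv⟩ := Module.Finite.exists_fin (R := R) (M := Q)
  obtain ⟨a, rfl⟩ := exists_eq_sum_tmul_of_span_range_eq_top hv y
  simp only [map_sum, lTensor_tmul] at hy
  obtain ⟨k, D, b, hDb, hDv⟩ := vanishesTrivially_of_sum_tmul_eq_zero R hv hy
  refine ⟨n, Q.subtype ∘ v, a, by simp, k, D, b, hDb, fun j => ?_⟩
  simpa using congrArg Q.subtype (hDv j)

end

theorem comp_piEquiv {R ι M N : Type*} [CommSemiring R] [Finite ι] [AddCommMonoid M] [Module R M]
    [AddCommMonoid N] [Module R N] (f : M →ₗ[R] N) (v : ι → M) :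
    f ∘ₗ Module.piEquiv ι R M v = Module.piEquiv ι R N (f ∘ v) :=
  (Pi.basisFun R ι).ext fun i => by
    simp only [Module.piEquiv, comp_apply, Module.Basis.constr_basis, Function.comp_apply]

theorem exists_comp_eq_of_exact_of_projective {R P A B C : Type*} [Ring R]
    [AddCommGroup P] [Module R P] [Module.Projective R P] [AddCommGroup A] [Module R A]
    [AddCommGroup B] [Module R B] [AddCommGroup C] [Module R C]
    {f : A →ₗ[R] B} {g : B →ₗ[R] C} (hfg : Function.Exact f g)
    {ψ : P →ₗ[R] B} (hψ : g ∘ₗ ψ = 0) : ∃ σ : P →ₗ[R] A, f ∘ₗ σ = ψ := by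
  obtain ⟨σ, hσ⟩ := Module.projective_lifting_property f.rangeRestrict
    (ψ.codRestrict (range f) fun w => (hfg _).1 (LinearMap.congr_fun hψ w))
    f.surjective_rangeRestrict
  exact ⟨σ, LinearMap.ext fun w => congrArg Subtype.val (LinearMap.congr_fun hσ w)⟩

theorem finitePresentation_quotient_range {R E F : Type*} [Ring R] [AddCommGroup E] [Module R E]
    [Module.Finite R E] [AddCommGroup F] [Module R F] [Module.FinitePresentation R F]
    (φ : E →ₗ[R] F) : Module.FinitePresentation R (F ⧸ range φ) :=
  Module.finitePresentation_of_surjective _ (range φ).mkQ_surjective <| by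
    rw [Submodule.ker_mkQ, range_eq_map]
    exact Module.Finite.fg_top.map φ

section

variable {R : Type u} [CommRing R] {A B C : Type*} [AddCommGroup A] [Module R A]
  [AddCommGroup B] [Module R B] [AddCommGroup C] [Module R C]

/-- The equational form of purity of `f`, up to the scalar `s`: whenever the finite linear system
`∑ j, D i j • x j = f (a i)` is solvable in `B`, the system `∑ j, D i j • x j = s • a i` is solvable
in `A`. For `s = 1` this says that `f` is pure. -/
def LinearSystemsDescend (s : R) (f : A →ₗ[R] B) : Prop :=
  ∀ (n k : ℕ) (D : Fin n → Fin k → R) (a : Fin n → A) (b : Fin k → B),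
    (∀ i, f (a i) = ∑ j, D i j • b j) → ∃ a' : Fin k → A, ∀ i, s • a i = ∑ j, D i j • a' j

theorem linearSystemsDescend_iff_exists_comp_eq_smul {s : R} {f : A →ₗ[R] B} :
    LinearSystemsDescend s f ↔
      ∀ (n k : ℕ) (φ : (Fin n → R) →ₗ[R] (Fin k → R)) (α : (Fin n → R) →ₗ[R] A)
        (β : (Fin k → R) →ₗ[R] B), f ∘ₗ α = β ∘ₗ φ →
          ∃ σ : (Fin k → R) →ₗ[R] A, σ ∘ₗ φ = s • α := by
  have square_iff {n k : ℕ} (D : Fin n → Fin k → R) (a : Fin n → A) (b : Fin k → B) :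
      f ∘ₗ Module.piEquiv _ R A a = Module.piEquiv _ R B b ∘ₗ Module.piEquiv _ R _ D ↔
        ∀ i, f (a i) = ∑ j, D i j • b j := by
    simp only [comp_piEquiv, EmbeddingLike.apply_eq_iff_eq, funext_iff, Function.comp_apply,
      Module.piEquiv_apply_apply]
  have triangle_iff {n k : ℕ} (D : Fin n → Fin k → R) (a : Fin n → A) (a' : Fin k → A) :
      Module.piEquiv _ R A a' ∘ₗ Module.piEquiv _ R _ D = s • Module.piEquiv _ R A a ↔
        ∀ i, s • a i = ∑ j, D i j • a' j := by
    simp only [comp_piEquiv, ← map_smul, EmbeddingLike.apply_eq_iff_eq, funext_iff,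
      Function.comp_apply, Pi.smul_apply, Module.piEquiv_apply_apply, eq_comm]
  simp only [LinearSystemsDescend, (Module.piEquiv _ R _).surjective.forall,
    (Module.piEquiv _ R _).surjective.exists, square_iff, triangle_iff]

namespace LinearSystemsDescend

variable {s : R} {f : A →ₗ[R] B} {g : B →ₗ[R] C}

theorem smul_eq_zero_of_lTensor_eq_zero (h : LinearSystemsDescend s f)
    {M : Type*} [AddCommGroup M] [Module R M] {x : M ⊗[R] A} (hx : lTensor M f x = 0) :
    s • x = 0 := by
  obtain ⟨n, v, a, rfl, k, D, b, hDb, hDv⟩ := exists_eq_sum_tmul_vanishesTrivially hx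
  obtain ⟨a', ha'⟩ := h n k D a b hDb
  simp only [Finset.smul_sum, ← tmul_smul]
  exact sum_tmul_eq_zero_of_vanishesTrivially R ⟨k, D, a', ha', hDv⟩

theorem of_forall_smul_eq_zero
    (h : ∀ (M : Type u) [AddCommGroup M] [Module R M], Module.FinitePresentation R M →
      ∀ x ∈ ker (lTensor M f), s • x = 0) : LinearSystemsDescend s f := by
  intro n k D a b hDb
  let φ : (Fin k → R) →ₗ[R] (Fin n → R) := Module.piEquiv (Fin k) R _ fun j i => D i j
  let v : Fin n → (Fin n → R) ⧸ range φ := (Module.piEquiv (Fin n) R _).symm (range φ).mkQ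
  have sum_smul_v (w : Fin n → R) : ∑ i, w i • v i = (range φ).mkQ w := by
    rw [← Module.piEquiv_apply_apply, LinearEquiv.apply_symm_apply]
  have span_v : Submodule.span R (Set.range v) = ⊤ := by
    rw [← Module.range_piEquiv, LinearEquiv.apply_symm_apply, Submodule.range_mkQ]
  have sum_smul_v_eq_zero_iff (w : Fin n → R) :
      ∑ i, w i • v i = 0 ↔ ∃ e : Fin k → R, ∀ i, w i = ∑ j, e j * D i j := by
    rw [sum_smul_v, Submodule.mkQ_apply, Submodule.Quotient.mk_eq_zero]
    simp only [φ, mem_range, funext_iff, Module.piEquiv_apply_apply, Finset.sum_apply,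
      Pi.smul_apply, smul_eq_mul, eq_comm]
  have sum_mem_ker : ∑ i, v i ⊗ₜ[R] a i ∈ ker (lTensor _ f) := by
    simp only [mem_ker, map_sum, lTensor_tmul]
    refine sum_tmul_eq_zero_of_vanishesTrivially R ⟨k, D, b, hDb, fun j => ?_⟩
    exact (sum_smul_v_eq_zero_iff _).2 ⟨Pi.single j 1, by simp [Pi.single_apply]⟩
  have sum_smul_eq_zero := h _ (finitePresentation_quotient_range φ) _ sum_mem_ker
  simp only [Finset.smul_sum, ← tmul_smul] at sum_smul_eq_zero
  obtain ⟨l, d, y, hdy, hdv⟩ := vanishesTrivially_of_sum_tmul_eq_zero R span_v sum_smul_eq_zero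
  choose e he using fun p => (sum_smul_v_eq_zero_iff _).1 (hdv p)
  refine ⟨fun j => ∑ p, e p j • y p, fun i => ?_⟩
  calc s • a i = ∑ p, (∑ j, e p j * D i j) • y p := by simp only [hdy, he]
    _ = ∑ j, D i j • ∑ p, e p j • y p := by
      simp only [Finset.sum_smul, Finset.smul_sum, smul_smul, mul_comm]
      exact Finset.sum_comm

theorem exists_comp_eq_smul (h : LinearSystemsDescend s f) (hg : Function.Surjective g)
    (hfg : Function.Exact f g) {N : Type*} [AddCommGroup N] [Module R N]
    [Module.FinitePresentation R N] (γ : N →ₗ[R] C) : ∃ δ : N →ₗ[R] B, g ∘ₗ δ = s • γ := by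
  obtain ⟨k, n, π, φ, hπ, hφπ⟩ := Module.FinitePresentation.exists_fin' R N
  obtain ⟨β, hβ⟩ := Module.projective_lifting_property g (γ ∘ₗ π) hg
  obtain ⟨α, hα⟩ := exists_comp_eq_of_exact_of_projective hfg (ψ := β ∘ₗ φ) <| by
    rw [← comp_assoc, hβ, comp_assoc, hφπ.linearMap_comp_eq_zero, comp_zero]
  obtain ⟨σ, hσ⟩ := linearSystemsDescend_iff_exists_comp_eq_smul.1 h n k φ α β hα
  have comp_φ_eq_zero : (s • β - f ∘ₗ σ) ∘ₗ φ = 0 := by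
    rw [sub_comp, comp_assoc, hσ, comp_smul, hα, smul_comp, sub_self]
  obtain ⟨δ, hδ : δ ∘ₗ π = s • β - f ∘ₗ σ⟩ :=
    (exact_lcomp_of_exact_of_surjective B hφπ hπ (s • β - f ∘ₗ σ)).1 comp_φ_eq_zero
  refine ⟨δ, (cancel_right hπ).1 ?_⟩
  rw [comp_assoc, hδ, comp_sub, ← comp_assoc, hfg.linearMap_comp_eq_zero, zero_comp, sub_zero,
    comp_smul, hβ, smul_comp]

theorem of_forall_exists_comp_eq_smul (hf : Function.Injective f) (hfg : Function.Exact f g)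
    (h : ∀ (N : Type u) [AddCommGroup N] [Module R N], Module.FinitePresentation R N →
      ∀ γ : N →ₗ[R] C, ∃ δ : N →ₗ[R] B, g ∘ₗ δ = s • γ) : LinearSystemsDescend s f := by
  rw [linearSystemsDescend_iff_exists_comp_eq_smul]
  intro n k φ α β hαβ
  have g_β_φ_eq_zero : (g ∘ₗ β) ∘ₗ φ = 0 := by
    rw [comp_assoc, ← hαβ, ← comp_assoc, hfg.linearMap_comp_eq_zero, zero_comp]
  obtain ⟨γ, hγ : γ ∘ₗ (range φ).mkQ = g ∘ₗ β⟩ :=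
    (exact_lcomp_of_exact_of_surjective C φ.exact_map_mkQ_range
      (range φ).mkQ_surjective (g ∘ₗ β)).1 g_β_φ_eq_zero
  obtain ⟨δ, hδ⟩ := h _ (finitePresentation_quotient_range φ) γ
  obtain ⟨σ, hσ⟩ := exists_comp_eq_of_exact_of_projective hfg
    (ψ := s • β - δ ∘ₗ (range φ).mkQ) <| by
      rw [comp_sub, comp_smul, ← comp_assoc, hδ, smul_comp, hγ, sub_self]
  refine ⟨σ, (cancel_left hf).1 ?_⟩
  rw [← comp_assoc, hσ, sub_comp, comp_assoc, range_mkQ_comp, comp_zero, sub_zero, smul_comp,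
    comp_smul, hαβ]

end LinearSystemsDescend

theorem almostPure_tfae_general (S : Set R) {f : A →ₗ[R] B} {g : B →ₗ[R] C}
    (hf : Function.Injective f) (hg : Function.Surjective g) (hfg : Function.Exact f g) :
    List.TFAE [
      ∀ (M : Type u) [AddCommGroup M] [Module R M],
        ∀ s ∈ S, ∀ x ∈ ker (lTensor M f), s • x = 0,
      ∀ (M : Type u) [AddCommGroup M] [Module R M], Module.FinitePresentation R M →
        ∀ s ∈ S, ∀ x ∈ ker (lTensor M f), s • x = 0,
      ∀ (N : Type u) [AddCommGroup N] [Module R N], Module.FinitePresentation R N →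
        ∀ γ : N →ₗ[R] C, ∀ s ∈ S, ∃ δ : N →ₗ[R] B, g ∘ₗ δ = s • γ,
      ∀ s ∈ S, LinearSystemsDescend s f] := by
  tfae_have 1 → 2 := fun h M _ _ _ => h M
  tfae_have 2 → 4 := fun h s hs => .of_forall_smul_eq_zero fun M _ _ hM => h M hM s hs
  tfae_have 4 → 1 := fun h M _ _ s hs x hx => (h s hs).smul_eq_zero_of_lTensor_eq_zero hx
  tfae_have 4 → 3 := fun h N _ _ _ γ s hs => (h s hs).exists_comp_eq_smul hg hfg γ
  tfae_have 3 → 4 := fun h s hs =>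
    .of_forall_exists_comp_eq_smul hf hfg fun N _ _ hN γ => h N hN γ s hs
  tfae_finish

end

/-- Characterizations of almost pure short exact sequences. -/
theorem almostPure_tfae
    {R : Type u} [CommRing R] (m : Ideal R) (hm : m * m = m)
    {A B C : Type u} [AddCommGroup A] [Module R A] [AddCommGroup B] [Module R B]
    [AddCommGroup C] [Module R C]
    (f : A →ₗ[R] B) (g : B →ₗ[R] C)
    (hf : Function.Injective f) (hg : Function.Surjective g)
    (hfg : LinearMap.range f = LinearMap.ker g) :
    -- (1) ↔ (2)
    ((IsAlmostPure m f ↔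
      (∀ (M : Type u) [AddCommGroup M] [Module R M], Module.FinitePresentation R M →
        ∀ s ∈ m, ∀ x ∈ LinearMap.ker (LinearMap.lTensor M f), s • x = 0)) ∧
    -- (1) ↔ (3)
    (IsAlmostPure m f ↔
      (∀ (N : Type u) [AddCommGroup N] [Module R N], Module.FinitePresentation R N →
        ∀ γ : N →ₗ[R] C, ∀ s ∈ m, ∃ δ : N →ₗ[R] B, g ∘ₗ δ = s • γ))) := by
  have tfae := almostPure_tfae_general (m : Set R) hf hg (exact_iff.2 hfg.symm)
  exact ⟨tfae.out 0 1, tfae.out 0 2⟩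
end

section
/- For an R-module M, the following are equivalent: (1) Tor_1^R(N, M) is almost zero for every finitely presented R-module N; (2) Tor_1^R(N, M) is almost zero for every R-module N; (3) Tor_n^R(N, M) is almost zero for every R-module N and every integer n ≥ 1. (These conditions characterize M being almost flat.) -/
universe u

open CategoryTheory

open scoped TensorProduct

/-!
For a projective resolution `P` of `M`, the annihilator of `Tor_{n+1}(N, M)` is the ideal of those
`s` carrying every `(n + 1)`-cycle of `N ⊗ P` to a boundary, so each implication can be proved for
one `s` at a time. A cycle of `N ⊗ P` involves finitely many elements of `N` and finitely many
relations among them, hence is the image of a cycle of `N' ⊗ P` with `N'` finitely presented; this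
reduces arbitrary `N` to finitely presented ones. Higher degrees follow by dimension shifting along
`0 → K → F → N → 0` with `F` free.
-/

section TensorProduct

variable {R : Type u} [CommRing R] {A B K F N P Q P₀ P₁ P₂ P₃ : Type*}
  [AddCommGroup A] [Module R A] [AddCommGroup B] [Module R B]
  [AddCommGroup K] [Module R K] [AddCommGroup F] [Module R F]
  [AddCommGroup N] [Module R N] [AddCommGroup P] [Module R P] [AddCommGroup Q] [Module R Q]
  [AddCommGroup P₀] [Module R P₀] [AddCommGroup P₁] [Module R P₁]
  [AddCommGroup P₂] [Module R P₂] [AddCommGroup P₃] [Module R P₃]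

lemma rTensor_lTensor_comm_apply (f : A →ₗ[R] B) (d : P →ₗ[R] Q) (z : A ⊗[R] P) :
    f.rTensor Q (d.lTensor A z) = d.lTensor B (f.rTensor P z) := by
  simp only [← LinearMap.comp_apply, LinearMap.lTensor_comp_rTensor,
    LinearMap.rTensor_comp_lTensor]

lemma exists_fg_submodule_mem_ker_lTensor {d : P →ₗ[R] Q} {z : N ⊗[R] P}
    (hz : d.lTensor N z = 0) :
    ∃ J : Submodule R N, J.FG ∧ ∃ z' : J ⊗[R] P,
      J.subtype.rTensor P z' = z ∧ d.lTensor J z' = 0 := by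
  obtain ⟨J₀, hJ₀, z₀, rfl⟩ := Submodule.exists_fg_le_eq_rTensor_subtype z
  rw [← rTensor_lTensor_comm_apply] at hz
  obtain ⟨J, hle, hJ, hz₀⟩ := TensorProduct.eq_zero_of_fg_of_subtype_eq_zero hJ₀ hz
  refine ⟨J, hJ, (Submodule.inclusion hle).rTensor P z₀, ?_, ?_⟩
  · rw [← LinearMap.rTensor_comp_apply, Submodule.subtype_comp_inclusion]
  · rw [← rTensor_lTensor_comm_apply, hz₀]

lemma exists_fg_le_ker_rTensor_mkQ_eq_zero {g : F →ₗ[R] N} (hg : Function.Surjective g)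
    {x : F ⊗[R] Q} (hx : g.rTensor Q x = 0) :
    ∃ K' : Submodule R F, K'.FG ∧ K' ≤ LinearMap.ker g ∧ K'.mkQ.rTensor Q x = 0 := by
  obtain ⟨y, rfl⟩ := (rTensor_exact Q (LinearMap.exact_subtype_ker_map g) hg x).1 hx
  obtain ⟨K', hK', hle, y', rfl⟩ := Submodule.exists_fg_le_eq_rTensor_inclusion y
  refine ⟨K', hK', hle, ?_⟩
  rw [← LinearMap.rTensor_comp_apply Q (LinearMap.ker g).subtype, Submodule.subtype_comp_inclusion]
  exact (rTensor_exact Q (LinearMap.exact_subtype_mkQ K') K'.mkQ_surjective).apply_apply_eq_zero y'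

lemma exists_finitePresentation_mem_ker_lTensor {d : P →ₗ[R] Q} {z : N ⊗[R] P}
    (hz : d.lTensor N z = 0) :
    ∃ (N' : Type u) (_ : AddCommGroup N') (_ : Module R N'), Module.FinitePresentation R N' ∧
      ∃ (f : N' →ₗ[R] N) (z' : N' ⊗[R] P), f.rTensor P z' = z ∧ d.lTensor N' z' = 0 := by
  obtain ⟨J, hJ, y, rfl, hy⟩ := exists_fg_submodule_mem_ker_lTensor hz
  have : Module.Finite R J := Module.Finite.iff_fg.2 hJ
  obtain ⟨k, g, hg⟩ := Module.Finite.exists_fin' R J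
  obtain ⟨x, rfl⟩ := LinearMap.rTensor_surjective P hg y
  rw [← rTensor_lTensor_comm_apply] at hy
  obtain ⟨K, hK, hle, hx⟩ := exists_fg_le_ker_rTensor_mkQ_eq_zero hg hy
  refine ⟨(Fin k → R) ⧸ K, inferInstance, inferInstance,
    Module.finitePresentation_of_surjective K.mkQ K.mkQ_surjective (by rwa [K.ker_mkQ]),
    J.subtype ∘ₗ K.liftQ g hle, K.mkQ.rTensor P x, ?_, ?_⟩
  · rw [← LinearMap.rTensor_comp_apply, LinearMap.comp_assoc, Submodule.liftQ_mkQ,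
      LinearMap.rTensor_comp_apply]
  · rw [← rTensor_lTensor_comm_apply, hx]

lemma colon_range_ker_lTensor_le_of_shortExact [Module.Flat R F] [Module.Flat R P₀]
    {i : K →ₗ[R] F} {g : F →ₗ[R] N} (hi : Function.Injective i) (hig : Function.Exact i g)
    (hg : Function.Surjective g) {d₃ : P₃ →ₗ[R] P₂} {d₂ : P₂ →ₗ[R] P₁} {d₁ : P₁ →ₗ[R] P₀}
    (hd₃₂ : Function.Exact d₃ d₂) (hd₂₁ : d₁ ∘ₗ d₂ = 0) :
    (LinearMap.range (d₂.lTensor K)).colon (LinearMap.ker (d₁.lTensor K) : Set _) ≤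
      (LinearMap.range (d₃.lTensor N)).colon (LinearMap.ker (d₂.lTensor N) : Set _) := by
  intro s hs
  rw [Submodule.mem_colon] at hs ⊢
  intro z hz
  obtain ⟨x, rfl⟩ := LinearMap.rTensor_surjective P₂ hg z
  obtain ⟨y, hy⟩ : ∃ y, i.rTensor P₁ y = d₂.lTensor F x := by
    rw [SetLike.mem_coe, LinearMap.mem_ker, ← rTensor_lTensor_comm_apply] at hz
    exact (rTensor_exact P₁ hig hg _).1 hz
  have hy_cycle : d₁.lTensor K y = 0 := by
    apply Module.Flat.rTensor_preserves_injective_linearMap (M := P₀) i hi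
    rw [rTensor_lTensor_comm_apply, hy, ← LinearMap.lTensor_comp_apply, hd₂₁,
      LinearMap.lTensor_zero, LinearMap.zero_apply, map_zero]
  obtain ⟨w, hw⟩ := hs y hy_cycle
  have hx_cycle : d₂.lTensor F (s • x - i.rTensor P₂ w) = 0 := by
    rw [map_sub, map_smul, ← rTensor_lTensor_comm_apply, hw, map_smul, hy, sub_self]
  obtain ⟨v, hv⟩ := (Module.Flat.lTensor_exact F hd₃₂ _).1 hx_cycle
  refine ⟨g.rTensor P₃ v, ?_⟩
  rw [← rTensor_lTensor_comm_apply, hv, map_sub, map_smul,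
    (rTensor_exact P₂ hig hg).apply_apply_eq_zero, sub_zero]

end TensorProduct

section Tor

lemma annihilator_ker_quotient_range_codRestrict {R A B C : Type*} [CommRing R]
    [AddCommGroup A] [Module R A] [AddCommGroup B] [Module R B] [AddCommGroup C] [Module R C]
    (f : A →ₗ[R] B) (g : B →ₗ[R] C) (hfg : ∀ a, f a ∈ LinearMap.ker g) :
    Module.annihilator R (LinearMap.ker g ⧸ LinearMap.range (f.codRestrict _ hfg)) =
      (LinearMap.range f).colon (LinearMap.ker g : Set B) := by
  rw [Submodule.annihilator_quotient, LinearMap.range_codRestrict]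
  ext s
  simp [Submodule.mem_colon]

lemma annihilator_homology_eq_colon {R : Type*} [CommRing R] (S : ShortComplex (ModuleCat R)) :
    Module.annihilator R S.homology =
      (LinearMap.range S.f.hom).colon (LinearMap.ker S.g.hom : Set S.X₂) :=
  S.moduleCatHomologyIso.toLinearEquiv.annihilator_eq.trans
    (annihilator_ker_quotient_range_codRestrict S.f.hom S.g.hom S.moduleCat_zero_apply)

variable {R : Type u} [CommRing R] {M : ModuleCat.{u} R}

lemma annihilator_tor_succ_eq_colon (P : ProjectiveResolution M) (N : Type u) [AddCommGroup N]
    [Module R N] (n : ℕ) :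
    Module.annihilator R (((Tor (ModuleCat.{u} R) (n + 1)).obj (ModuleCat.of R N)).obj M) =
      (LinearMap.range ((P.complex.d (n + 2) (n + 1)).hom.lTensor N)).colon
        (LinearMap.ker ((P.complex.d (n + 1) n).hom.lTensor N) : Set _) := by
  let F := (MonoidalCategory.tensoringLeft (ModuleCat.{u} R)).obj (ModuleCat.of R N)
  let C := (F.mapHomologicalComplex (ComplexShape.down ℕ)).obj P.complex
  let torIso : ((Tor (ModuleCat.{u} R) (n + 1)).obj (ModuleCat.of R N)).obj M ≅
      (C.sc' (n + 2) (n + 1) n).homology :=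
    P.isoLeftDerivedObj F (n + 1) ≪≫
      ShortComplex.homologyMapIso (C.isoSc' (n + 2) (n + 1) n (by simp) (by simp))
  rw [torIso.toLinearEquiv.annihilator_eq]
  exact annihilator_homology_eq_colon (C.sc' (n + 2) (n + 1) n)

variable (M) {N : Type u} [AddCommGroup N] [Module R N] (n : ℕ)

lemma mem_annihilator_tor_succ_of_forall_finitePresentation {s : R}
    (hs : ∀ (N' : Type u) [AddCommGroup N'] [Module R N'], Module.FinitePresentation R N' →
      s ∈ Module.annihilator R
        (((Tor (ModuleCat.{u} R) (n + 1)).obj (ModuleCat.of R N')).obj M)) :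
    s ∈ Module.annihilator R (((Tor (ModuleCat.{u} R) (n + 1)).obj (ModuleCat.of R N)).obj M) := by
  let P := projectiveResolution M
  rw [annihilator_tor_succ_eq_colon P, Submodule.mem_colon]
  intro z hz
  obtain ⟨N', _, _, hN', f, z', rfl, hz'⟩ := exists_finitePresentation_mem_ker_lTensor hz
  have hs' := hs N' hN'
  rw [annihilator_tor_succ_eq_colon P, Submodule.mem_colon] at hs'
  obtain ⟨w, hw⟩ := hs' z' hz'
  exact ⟨f.rTensor _ w, by rw [← rTensor_lTensor_comm_apply, hw, map_smul]⟩

lemma annihilator_tor_succ_le_of_shortExact {K F : Type u} [AddCommGroup K] [Module R K]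
    [AddCommGroup F] [Module R F] [Module.Flat R F]
    {i : K →ₗ[R] F} {g : F →ₗ[R] N} (hi : Function.Injective i) (hig : Function.Exact i g)
    (hg : Function.Surjective g) :
    Module.annihilator R (((Tor (ModuleCat.{u} R) (n + 1)).obj (ModuleCat.of R K)).obj M) ≤
      Module.annihilator R (((Tor (ModuleCat.{u} R) (n + 2)).obj (ModuleCat.of R N)).obj M) := by
  let P := projectiveResolution M
  have : Module.Projective R (P.complex.X n) :=
    (IsProjective.iff_projective (P.complex.X n)).2 (P.projective n)
  rw [annihilator_tor_succ_eq_colon P, annihilator_tor_succ_eq_colon P]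
  refine colon_range_ker_lTensor_le_of_shortExact hi hig hg ?_ ?_
  · exact (ShortComplex.ShortExact.moduleCat_exact_iff_function_exact _).1 (P.exact_succ (n + 1))
  · exact congrArg ModuleCat.Hom.hom (P.complex.d_comp_d (n + 2) (n + 1) n)

lemma mem_annihilator_tor_succ_of_forall_tor_one {s : R}
    (hs : ∀ (N' : Type u) [AddCommGroup N'] [Module R N'],
      s ∈ Module.annihilator R (((Tor (ModuleCat.{u} R) 1).obj (ModuleCat.of R N')).obj M)) :
    s ∈ Module.annihilator R (((Tor (ModuleCat.{u} R) (n + 1)).obj (ModuleCat.of R N)).obj M) := by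
  induction n generalizing N with
  | zero => exact hs N
  | succ n ih =>
    let g : (N →₀ R) →ₗ[R] N := Finsupp.linearCombination R id
    have hg : Function.Surjective g := Finsupp.linearCombination_id_surjective R N
    exact annihilator_tor_succ_le_of_shortExact M n (LinearMap.ker g).injective_subtype
      (LinearMap.exact_subtype_ker_map g) hg (ih (N := LinearMap.ker g))

end Tor

theorem almostFlat_tor_tfae_general {R : Type u} [CommRing R] (I : Ideal R)
    (M : Type u) [AddCommGroup M] [Module R M] :
    List.TFAE [
      ∀ (N : Type u) [AddCommGroup N] [Module R N], Module.FinitePresentation R N →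
        ∀ s ∈ I, ∀ x : ((Tor (ModuleCat.{u} R) 1).obj (ModuleCat.of R N)).obj (ModuleCat.of R M),
          s • x = 0,
      ∀ (N : Type u) [AddCommGroup N] [Module R N],
        ∀ s ∈ I, ∀ x : ((Tor (ModuleCat.{u} R) 1).obj (ModuleCat.of R N)).obj (ModuleCat.of R M),
          s • x = 0,
      ∀ (N : Type u) [AddCommGroup N] [Module R N], ∀ n : ℕ, 1 ≤ n →
        ∀ s ∈ I, ∀ x : ((Tor (ModuleCat.{u} R) n).obj (ModuleCat.of R N)).obj (ModuleCat.of R M),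
          s • x = 0] := by
  simp only [← Module.mem_annihilator]
  tfae_have 1 → 2 := fun h N _ _ s hs ↦
    mem_annihilator_tor_succ_of_forall_finitePresentation _ 0 fun N' _ _ hN' ↦ h N' hN' s hs
  tfae_have 2 → 3 := by
    intro h N _ _ n hn s hs
    obtain ⟨n, rfl⟩ := Nat.exists_eq_add_of_le' hn
    exact mem_annihilator_tor_succ_of_forall_tor_one _ n fun N' _ _ ↦ h N' s hs
  tfae_have 3 → 1 := fun h N _ _ _ ↦ h N 1 le_rfl
  tfae_finish

/-- Characterizations of almost flatness of `M` in terms of `Tor`. -/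
theorem almostFlat_tor_tfae
    {R : Type u} [CommRing R] (m : Ideal R) (hm : m * m = m)
    (M : Type u) [AddCommGroup M] [Module R M] :
    -- (1) ↔ (2)
    (((∀ (N : Type u) [AddCommGroup N] [Module R N], Module.FinitePresentation R N →
        ∀ s ∈ m, ∀ x : ((Tor (ModuleCat.{u} R) 1).obj (ModuleCat.of R N)).obj (ModuleCat.of R M),
          s • x = 0) ↔
      (∀ (N : Type u) [AddCommGroup N] [Module R N],
        ∀ s ∈ m, ∀ x : ((Tor (ModuleCat.{u} R) 1).obj (ModuleCat.of R N)).obj (ModuleCat.of R M),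
          s • x = 0)) ∧
    -- (2) ↔ (3)
    ((∀ (N : Type u) [AddCommGroup N] [Module R N],
        ∀ s ∈ m, ∀ x : ((Tor (ModuleCat.{u} R) 1).obj (ModuleCat.of R N)).obj (ModuleCat.of R M),
          s • x = 0) ↔
      (∀ (N : Type u) [AddCommGroup N] [Module R N], ∀ n : ℕ, 1 ≤ n →
        ∀ s ∈ m, ∀ x : ((Tor (ModuleCat.{u} R) n).obj (ModuleCat.of R N)).obj (ModuleCat.of R M),
          s • x = 0))) := by
  exact ⟨(almostFlat_tor_tfae_general m M).out 0 1, (almostFlat_tor_tfae_general m M).out 1 2⟩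
end

section
/- Let 0 → A → B → C → 0 be an almost pure short exact sequence of R-modules with B almost flat. Then both A and C are almost flat. -/
universe u

open CategoryTheory

/-- A module `F` is almost flat if `Tor₁ᴿ(N, F)` is almost zero for every module `N`. -/
def IsAlmostFlat {R : Type u} [CommRing R] (m : Ideal R)
    (F : Type u) [AddCommGroup F] [Module R F] : Prop :=
  ∀ (N : Type u) [AddCommGroup N] [Module R N],
    ∀ s ∈ m, ∀ x : ((Tor (ModuleCat.{u} R) 1).obj (ModuleCat.of R N)).obj (ModuleCat.of R F),
      s • x = 0

/-!
`Tor₁(N, F)` can be computed from either variable: for a presentation `0 → K → L → N → 0` with `L`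
flat, it has the same annihilator as the kernel of `F ⊗ K → F ⊗ L`. On such kernels both claims are
diagram chases. For `A`, an element of `ker (A ⊗ K → A ⊗ L)` is carried by `f` to
`ker (B ⊗ K → B ⊗ L)`, and `A ⊗ K → B ⊗ K` is almost injective. For `C`, an element of
`ker (C ⊗ K → C ⊗ L)` lifts to `B ⊗ K`, and as in the snake lemma the obstruction to choosing the
lift in `ker (B ⊗ K → B ⊗ L)` lies in `ker (A ⊗ N → B ⊗ N)`. Each chase
uses one scalar killing the kernels of `f` and one killing the `Tor₁` of `B`, so products of two
such scalars kill the `Tor₁` of `A` and of `C`.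
-/

open TensorProduct

section AnnihilatorKer

variable {R : Type*} [CommRing R]

theorem annihilator_ker_mul_annihilator_ker_le {X Y Z : Type*} [AddCommGroup X] [Module R X]
    [AddCommGroup Y] [Module R Y] [AddCommGroup Z] [Module R Z] (φ : X →ₗ[R] Y) (ψ : Y →ₗ[R] Z) :
    (LinearMap.ker φ).annihilator * (LinearMap.ker ψ).annihilator ≤
      (LinearMap.ker (ψ ∘ₗ φ)).annihilator := by
  refine Ideal.mul_le.2 fun s hs t ht => Submodule.mem_annihilator.2 fun x hx => ?_
  have hφ : t • φ x = 0 := Submodule.mem_annihilator.1 ht (φ x) hx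
  rw [mul_smul]
  exact Submodule.mem_annihilator.1 hs (t • x) (by rw [LinearMap.mem_ker, map_smul, hφ])

variable {A B C K L N : Type*} [AddCommGroup A] [Module R A] [AddCommGroup B] [Module R B]
  [AddCommGroup C] [Module R C] [AddCommGroup K] [Module R K] [AddCommGroup L] [Module R L]
  [AddCommGroup N] [Module R N]

theorem annihilator_ker_rTensor_eq_annihilator_ker_lTensor (f : A →ₗ[R] B) :
    (LinearMap.ker (f.rTensor N)).annihilator = (LinearMap.ker (f.lTensor N)).annihilator := by
  have hmap : (LinearMap.ker (f.rTensor N)).map (TensorProduct.comm R A N).toLinearMap =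
      LinearMap.ker (f.lTensor N) := by
    rw [← LinearEquiv.ker_comp (TensorProduct.comm R B N), ← LinearMap.lTensor_comp_comm,
      LinearMap.ker_comp,
      Submodule.map_comap_eq_of_surjective (TensorProduct.comm R A N).surjective]
  rw [← hmap]
  exact ((TensorProduct.comm R A N).submoduleMap _).annihilator_eq

theorem rTensor_lTensor_comm (f : A →ₗ[R] B) (i : K →ₗ[R] L) (x : A ⊗[R] K) :
    f.rTensor L (i.lTensor A x) = i.lTensor B (f.rTensor K x) := by
  rw [← LinearMap.comp_apply, ← LinearMap.comp_apply, LinearMap.rTensor_comp_lTensor,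
    LinearMap.lTensor_comp_rTensor]

theorem annihilator_ker_rTensor_mul_annihilator_ker_lTensor_le
    (f : A →ₗ[R] B) (i : K →ₗ[R] L) :
    (LinearMap.ker (f.rTensor K)).annihilator * (LinearMap.ker (i.lTensor B)).annihilator ≤
      (LinearMap.ker (i.lTensor A)).annihilator := by
  refine (annihilator_ker_mul_annihilator_ker_le (f.rTensor K) (i.lTensor B)).trans
    (Submodule.annihilator_mono fun x (hx : i.lTensor A x = 0) => ?_)
  rw [LinearMap.mem_ker, LinearMap.comp_apply, ← rTensor_lTensor_comm, hx, map_zero]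

variable {f : A →ₗ[R] B} {g : B →ₗ[R] C} {i : K →ₗ[R] L} {p : L →ₗ[R] N}

theorem annihilator_ker_rTensor_mul_annihilator_ker_lTensor_le_of_exact
    (hfg : Function.Exact f g) (hg : Function.Surjective g)
    (hip : Function.Exact i p) (hp : Function.Surjective p) :
    (LinearMap.ker (f.rTensor N)).annihilator * (LinearMap.ker (i.lTensor B)).annihilator ≤
      (LinearMap.ker (i.lTensor C)).annihilator := by
  refine Ideal.mul_le.2 fun s hs t ht => Submodule.mem_annihilator.2 fun z hz => ?_
  obtain ⟨y, rfl⟩ := LinearMap.rTensor_surjective K hg z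
  obtain ⟨w, hw⟩ : ∃ w : A ⊗[R] L, f.rTensor L w = i.lTensor B y :=
    (rTensor_exact L hfg hg _).1 (by rw [rTensor_lTensor_comm, LinearMap.mem_ker.1 hz])
  have hpw : f.rTensor N (p.lTensor A w) = 0 := by
    rw [rTensor_lTensor_comm, hw, (lTensor_exact B hip hp).apply_apply_eq_zero]
  obtain ⟨v, hv⟩ : ∃ v : A ⊗[R] K, i.lTensor A v = s • w :=
    (lTensor_exact A hip hp _).1 (by rw [map_smul, Submodule.mem_annihilator.1 hs _ hpw])
  have hlift : s • y - f.rTensor K v ∈ LinearMap.ker (i.lTensor B) := by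
    rw [LinearMap.mem_ker, map_sub, ← rTensor_lTensor_comm, hv, map_smul, map_smul, hw, sub_self]
  calc (s * t) • g.rTensor K y = g.rTensor K (t • (s • y - f.rTensor K v)) := by
        rw [map_smul, map_sub, (rTensor_exact K hfg hg).apply_apply_eq_zero, sub_zero, map_smul,
          mul_comm, mul_smul]
    _ = 0 := by rw [Submodule.mem_annihilator.1 ht _ hlift, map_zero]

theorem annihilator_ker_rTensor_le_of_flat [Module.Flat R B]
    (hfg : Function.Exact f g) (hg : Function.Surjective g)
    (hi : Function.Injective i) (hip : Function.Exact i p) (hp : Function.Surjective p) :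
    (LinearMap.ker (f.rTensor N)).annihilator ≤ (LinearMap.ker (i.lTensor C)).annihilator := by
  have hker : LinearMap.ker (i.lTensor B) = ⊥ :=
    LinearMap.ker_eq_bot.2 (Module.Flat.lTensor_preserves_injective_linearMap i hi)
  simpa only [hker, Submodule.annihilator_bot, Ideal.mul_top] using
    annihilator_ker_rTensor_mul_annihilator_ker_lTensor_le_of_exact hfg hg hip hp

theorem annihilator_ker_rTensor_eq_of_flat [Module.Flat R B] [Module.Flat R L]
    (hf : Function.Injective f) (hfg : Function.Exact f g) (hg : Function.Surjective g)
    (hi : Function.Injective i) (hip : Function.Exact i p) (hp : Function.Surjective p) :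
    (LinearMap.ker (f.rTensor N)).annihilator = (LinearMap.ker (i.lTensor C)).annihilator := by
  -- The claim is symmetric in the two short exact sequences, up to swapping tensor factors.
  refine (annihilator_ker_rTensor_le_of_flat hfg hg hi hip hp).antisymm ?_
  rw [annihilator_ker_rTensor_eq_annihilator_ker_lTensor,
    ← annihilator_ker_rTensor_eq_annihilator_ker_lTensor i]
  exact annihilator_ker_rTensor_le_of_flat hip hp hf hfg hg

end AnnihilatorKer

section TorOne

variable {R : Type u} [CommRing R]

/-- The homology of `X₁ → X₂ → X₃`, computed as the kernel of the map `j : Q → X₃` induced on a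
module `Q` presented as the cokernel of `X₁ → X₂`. -/
noncomputable def homologyLinearEquivKer (S : ShortComplex (ModuleCat.{u} R))
    {Q : Type u} [AddCommGroup Q] [Module R Q] {π : S.X₂ →ₗ[R] Q} {j : Q →ₗ[R] S.X₃}
    (hπ : Function.Surjective π) (hexact : Function.Exact S.f.hom π) (hj : j ∘ₗ π = S.g.hom) :
    S.homology ≃ₗ[R] LinearMap.ker j :=
  let hcoker := ModuleCat.isColimitCokernelCofork S.f (ModuleCat.ofHom π) hexact hπ
  have hdesc : hcoker.desc (Limits.CokernelCofork.ofπ S.g S.zero) = ModuleCat.ofHom j :=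
    Limits.Cofork.IsColimit.hom_ext hcoker
      ((hcoker.fac _ _).trans (ModuleCat.hom_ext hj.symm))
  let h : S.RightHomologyData :=
    { Q := ModuleCat.of R Q
      H := ModuleCat.of R (LinearMap.ker j)
      p := ModuleCat.ofHom π
      ι := ModuleCat.ofHom (LinearMap.ker j).subtype
      wp := by ext x; exact hexact.apply_apply_eq_zero x
      hp := hcoker
      wι := by rw [hdesc]; ext x; exact x.2
      hι := ModuleCat.isLimitKernelFork _ _
        (by rw [hdesc]; exact LinearMap.exact_subtype_ker_map j) Subtype.val_injective }
  h.homologyIso.toLinearEquiv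

variable {F : Type u} [AddCommGroup F] [Module R F]

/-- `Tor₁(N, F)` as the kernel of `N ⊗ Ω → N ⊗ P₀`, where `Ω` is the first syzygy of a projective
resolution `P` of `F`, encoded as the range of `P₁ → P₀`. -/
noncomputable def torOneLinearEquivKer (N : Type u) [AddCommGroup N] [Module R N]
    (P : ProjectiveResolution (ModuleCat.of R F)) :
    ((Tor (ModuleCat.{u} R) 1).obj (ModuleCat.of R N)).obj (ModuleCat.of R F) ≃ₗ[R]
      LinearMap.ker ((LinearMap.range (P.complex.d 1 0).hom).subtype.lTensor N) :=
  let G := (MonoidalCategory.tensoringLeft (ModuleCat.{u} R)).obj (ModuleCat.of R N)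
  let X := (G.mapHomologicalComplex (ComplexShape.down ℕ)).obj P.complex
  let π := (P.complex.d 1 0).hom.rangeRestrict
  have hπ : Function.Surjective π := LinearMap.surjective_rangeRestrict _
  have hexact : Function.Exact (P.complex.d 2 1).hom π :=
    LinearMap.exact_iff.2 <| (LinearMap.ker_rangeRestrict _).trans
      (P.exact_succ 0).moduleCat_range_eq_ker.symm
  (P.isoLeftDerivedObj G 1 ≪≫ X.homologyIsoSc' 2 1 0 (by simp) (by simp)).toLinearEquiv ≪≫ₗ
    homologyLinearEquivKer (X.sc' 2 1 0) (π := π.lTensor N) (LinearMap.lTensor_surjective N hπ)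
      (lTensor_exact N hexact hπ) (LinearMap.lTensor_comp N _ π).symm

theorem annihilator_Tor_one_eq_of_flat {K L : Type*} {N : Type u} [AddCommGroup K] [Module R K]
    [AddCommGroup L] [Module R L] [Module.Flat R L] [AddCommGroup N] [Module R N]
    {i : K →ₗ[R] L} {p : L →ₗ[R] N}
    (hi : Function.Injective i) (hip : Function.Exact i p) (hp : Function.Surjective p) :
    Module.annihilator R
        (((Tor (ModuleCat.{u} R) 1).obj (ModuleCat.of R N)).obj (ModuleCat.of R F)) =
      (LinearMap.ker (i.lTensor F)).annihilator := by
  let P := projectiveResolution (ModuleCat.of R F)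
  have : Module.Projective R (P.complex.X 0) := (IsProjective.iff_projective _).2 (P.projective 0)
  have haug : Function.Surjective (P.π.f 0).hom :=
    (ModuleCat.epi_iff_surjective (P.π.f 0)).1 inferInstance
  have hsyzygy : Function.Exact (LinearMap.range (P.complex.d 1 0).hom).subtype (P.π.f 0).hom :=
    LinearMap.exact_iff.2 <| P.exact₀.moduleCat_range_eq_ker.symm.trans
      (Submodule.range_subtype _).symm
  rw [(torOneLinearEquivKer N P).annihilator_eq, ← Submodule.annihilator,
    ← annihilator_ker_rTensor_eq_annihilator_ker_lTensor]
  exact annihilator_ker_rTensor_eq_of_flat Subtype.val_injective hsyzygy haug hi hip hp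

end TorOne

theorem exists_flat_surjective.{v, w} (R : Type v) (N : Type w) [CommRing R] [AddCommGroup N]
    [Module R N] :
    ∃ (L : Type max v w) (_ : AddCommGroup L) (_ : Module R L) (_ : Module.Flat R L)
      (p : L →ₗ[R] N), Function.Surjective p :=
  ⟨N →₀ R, inferInstance, inferInstance, inferInstance, Finsupp.linearCombination R id,
    Finsupp.linearCombination_id_surjective R N⟩

section Almost

variable {R : Type u} [CommRing R] {I J : Ideal R} {A B C : Type u} [AddCommGroup A] [Module R A]
  [AddCommGroup B] [Module R B] [AddCommGroup C] [Module R C]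

theorem isAlmostFlat_iff_le_annihilator_Tor_one : IsAlmostFlat I A ↔
    ∀ (N : Type u) [AddCommGroup N] [Module R N], I ≤ Module.annihilator R
      (((Tor (ModuleCat.{u} R) 1).obj (ModuleCat.of R N)).obj (ModuleCat.of R A)) := by
  simp only [IsAlmostFlat, SetLike.le_def, Module.mem_annihilator]

theorem isAlmostFlat_iff_le_annihilator_ker_lTensor : IsAlmostFlat I A ↔
    ∀ (L : Type u) [AddCommGroup L] [Module R L] [Module.Flat R L] (K : Submodule R L),
      I ≤ (LinearMap.ker (K.subtype.lTensor A)).annihilator := by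
  rw [isAlmostFlat_iff_le_annihilator_Tor_one]
  constructor
  · intro htor L _ _ _ K
    rw [← annihilator_Tor_one_eq_of_flat K.subtype_injective (LinearMap.exact_subtype_mkQ K)
      K.mkQ_surjective]
    exact htor (L ⧸ K)
  · intro hker N _ _
    obtain ⟨L, _, _, _, p, hp⟩ := exists_flat_surjective R N
    rw [annihilator_Tor_one_eq_of_flat (LinearMap.ker p).subtype_injective
      (LinearMap.exact_subtype_ker_map p) hp]
    exact hker L (LinearMap.ker p)

theorem isAlmostPure_iff_le_annihilator_ker_rTensor {f : A →ₗ[R] B} : IsAlmostPure I f ↔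
    ∀ (M : Type u) [AddCommGroup M] [Module R M],
      I ≤ (LinearMap.ker (f.rTensor M)).annihilator := by
  simp only [IsAlmostPure, annihilator_ker_rTensor_eq_annihilator_ker_lTensor, SetLike.le_def,
    Submodule.mem_annihilator]

theorem almostFlat_of_almostPure_general {f : A →ₗ[R] B} {g : B →ₗ[R] C}
    (hfg : Function.Exact f g) (hg : Function.Surjective g)
    (hpure : IsAlmostPure I f) (hB : IsAlmostFlat J B) :
    IsAlmostFlat (I * J) A ∧ IsAlmostFlat (I * J) C := by
  rw [isAlmostPure_iff_le_annihilator_ker_rTensor] at hpure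
  simp only [isAlmostFlat_iff_le_annihilator_ker_lTensor] at hB ⊢
  constructor <;> intro L _ _ _ K
  · exact (Ideal.mul_mono (hpure K) (hB L K)).trans
      (annihilator_ker_rTensor_mul_annihilator_ker_lTensor_le f K.subtype)
  · exact (Ideal.mul_mono (hpure (L ⧸ K)) (hB L K)).trans
      (annihilator_ker_rTensor_mul_annihilator_ker_lTensor_le_of_exact hfg hg
        (LinearMap.exact_subtype_mkQ K) K.mkQ_surjective)

end Almost

/-- Almost pure submodules and almost pure quotients of
almost flat modules are almost flat. -/
theorem almostFlat_of_almostPure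
    {R : Type u} [CommRing R] (m : Ideal R) (hm : m * m = m)
    {A B C : Type u} [AddCommGroup A] [Module R A] [AddCommGroup B] [Module R B]
    [AddCommGroup C] [Module R C]
    (f : A →ₗ[R] B) (g : B →ₗ[R] C)
    (hf : Function.Injective f) (hg : Function.Surjective g)
    (hfg : LinearMap.range f = LinearMap.ker g)
    (hpure : IsAlmostPure m f) (hB : IsAlmostFlat m B) :
    IsAlmostFlat m A ∧ IsAlmostFlat m C := by
  have h := almostFlat_of_almostPure_general (LinearMap.exact_iff.2 hfg.symm) hg hpure hB
  rwa [hm] at h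
end

section
/- An R-module F is almost flat if and only if every short exact sequence of R-modules of the form 0 → A → B → F → 0 is almost pure. -/
universe u

open CategoryTheory

/-!
If `0 → K → P → F → 0` is exact with `P` projective, then `Tor₁(N, F)` is the kernel of
`N ⊗ K → N ⊗ P`, so almost flatness of `F` is almost purity of this one sequence. Any other exact
sequence `0 → A → B → F → 0` receives a map from it lifting the identity of `F`. The square formed
by `K`, `P`, `A`, `B` is then a pushout, and `N ⊗ -` preserves pushouts, so the kernel of
`N ⊗ K → N ⊗ P` surjects onto the kernel of `N ⊗ A → N ⊗ B`.
-/

open TensorProduct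

section Pushout

variable {R K P A B F : Type*} [Ring R] [AddCommGroup K] [Module R K]
  [AddCommGroup P] [Module R P] [AddCommGroup A] [Module R A] [AddCommGroup B] [Module R B]
  [AddCommGroup F] [Module R F]
  {j : K →ₗ[R] P} {φ : K →ₗ[R] A} {g : P →ₗ[R] B} {i : A →ₗ[R] B} {p : B →ₗ[R] F}

theorem exists_comp_eq_of_exact (hi : Function.Injective i) (hip : Function.Exact i p)
    {f : K →ₗ[R] B} (hf : p ∘ₗ f = 0) : ∃ φ : K →ₗ[R] A, i ∘ₗ φ = f := by
  have hrange (k : K) : f k ∈ LinearMap.range i := (hip _).mp (LinearMap.congr_fun hf k)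
  let e := LinearEquiv.ofInjective i hi
  exact ⟨e.symm ∘ₗ f.codRestrict _ hrange,
    LinearMap.ext fun k ↦ congrArg Subtype.val (e.apply_symm_apply ⟨f k, hrange k⟩)⟩

theorem exact_prod_coprod_neg (hi : Function.Injective i) (hip : Function.Exact i p)
    (hj : Function.Exact j (p ∘ₗ g)) (hφ : i ∘ₗ φ = g ∘ₗ j) :
    Function.Exact (j.prod φ) (g.coprod (-i)) := by
  have hφ_apply (k : K) : i (φ k) = g (j k) := LinearMap.congr_fun hφ k
  rintro ⟨y, a⟩
  constructor
  · intro hya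
    have hgy : g y = i a := by simpa [add_neg_eq_zero] using hya
    obtain ⟨k, rfl⟩ : y ∈ Set.range j := by
      rw [← hj y, LinearMap.comp_apply, hgy, hip.apply_apply_eq_zero]
    exact ⟨k, Prod.ext rfl (hi ((hφ_apply k).trans hgy))⟩
  · rintro ⟨k, hk⟩
    simp [← hk, hφ_apply]

theorem surjective_coprod_neg (hip : Function.Exact i p) (hpg : Function.Surjective (p ∘ₗ g)) :
    Function.Surjective (g.coprod (-i)) := by
  intro b
  obtain ⟨y, hy⟩ := hpg (p b)
  obtain ⟨a, ha⟩ : g y - b ∈ Set.range i := by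
    rw [← hip, map_sub, sub_eq_zero]
    exact hy
  exact ⟨(y, a), by simp [ha]⟩

end Pushout

theorem exists_mem_ker_lTensor_of_exact {R K P A B : Type*} [CommRing R]
    [AddCommGroup K] [Module R K] [AddCommGroup P] [Module R P] [AddCommGroup A] [Module R A]
    [AddCommGroup B] [Module R B]
    {j : K →ₗ[R] P} {φ : K →ₗ[R] A} {g : P →ₗ[R] B} {i : A →ₗ[R] B}
    (N : Type*) [AddCommGroup N] [Module R N]
    (hexact : Function.Exact (j.prod φ) (g.coprod (-i)))
    (hsurj : Function.Surjective (g.coprod (-i)))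
    {x : N ⊗[R] A} (hx : x ∈ LinearMap.ker (i.lTensor N)) :
    ∃ y ∈ LinearMap.ker (j.lTensor N), φ.lTensor N y = x := by
  have hker : (g.coprod (-i)).lTensor N ((LinearMap.inr R P A).lTensor N x) = 0 := by
    rw [← LinearMap.lTensor_comp_apply, LinearMap.coprod_inr, LinearMap.lTensor_neg,
      LinearMap.neg_apply, LinearMap.mem_ker.mp hx, neg_zero]
  obtain ⟨y, hy⟩ := (lTensor_exact N hexact hsurj _).mp hker
  refine ⟨y, ?_, ?_⟩
  · have hfst := congrArg ((LinearMap.fst R P A).lTensor N) hy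
    simpa only [← LinearMap.lTensor_comp_apply, LinearMap.fst_prod, LinearMap.fst_comp_inr,
      LinearMap.lTensor_zero, LinearMap.zero_apply, LinearMap.mem_ker] using hfst
  · have hsnd := congrArg ((LinearMap.snd R P A).lTensor N) hy
    simpa only [← LinearMap.lTensor_comp_apply, LinearMap.snd_prod, LinearMap.snd_comp_inr,
      LinearMap.lTensor_id, LinearMap.id_apply] using hsnd

theorem IsAlmostPure.of_projective_presentation {R : Type u} [CommRing R] {m : Ideal R}
    {K P A B F : Type u}
    [AddCommGroup K] [Module R K] [AddCommGroup P] [Module R P] [AddCommGroup A] [Module R A]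
    [AddCommGroup B] [Module R B] [AddCommGroup F] [Module R F] [Module.Projective R P]
    {j : K →ₗ[R] P} {ε : P →ₗ[R] F} {i : A →ₗ[R] B} {p : B →ₗ[R] F}
    (hpure : IsAlmostPure m j) (hjε : Function.Exact j ε) (hε : Function.Surjective ε)
    (hi : Function.Injective i) (hip : Function.Exact i p) (hp : Function.Surjective p) :
    IsAlmostPure m i := by
  obtain ⟨g, rfl⟩ := Module.projective_lifting_property p ε hp
  obtain ⟨φ, hφ⟩ := exists_comp_eq_of_exact hi hip (f := g ∘ₗ j) hjε.linearMap_comp_eq_zero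
  intro N _ _ s hs x hx
  obtain ⟨y, hy, rfl⟩ := exists_mem_ker_lTensor_of_exact N
    (exact_prod_coprod_neg hi hip hjε hφ) (surjective_coprod_neg hip hε) hx
  rw [← map_smul, hpure N s hs y hy, map_zero]

/-- The homology of a complex `X₁ → X₂ → X₃` of modules, when `X₂ → X₃` is written as a cokernel
`q` of `X₁ → X₂` followed by `i`, is the kernel of `i`. -/
noncomputable def homologyEquivKer {R : Type*} [Ring R] (S : ShortComplex (ModuleCat.{u} R))
    {Q : Type*} [AddCommGroup Q] [Module R Q] {q : S.X₂ →ₗ[R] Q} {i : Q →ₗ[R] S.X₃}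
    (hexact : Function.Exact S.f.hom q) (hq : Function.Surjective q) (hqi : i ∘ₗ q = S.g.hom) :
    S.homology ≃ₗ[R] LinearMap.ker i :=
  have hqi_apply (z : S.X₂) : i (q z) = S.g.hom z := LinearMap.congr_fun hqi z
  let qKer : LinearMap.ker S.g.hom →ₗ[R] LinearMap.ker i :=
    q.restrict fun z hz ↦ (hqi_apply z).trans hz
  have hqKer_exact : Function.Exact S.moduleCatToCycles qKer := fun z ↦ by
    rw [Subtype.ext_iff, Set.mem_range]
    simp_rw [Subtype.ext_iff]
    exact hexact z.1
  have hqKer : Function.Surjective qKer := by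
    rintro ⟨y, hy⟩
    obtain ⟨z, rfl⟩ := hq y
    exact ⟨⟨z, (hqi_apply z).symm.trans hy⟩, rfl⟩
  S.moduleCatHomologyIso.toLinearEquiv ≪≫ₗ hqKer_exact.linearEquivOfSurjective hqKer

section Tor

variable {R : Type u} [CommRing R] {F : ModuleCat.{u} R} (P : ProjectiveResolution F)

/-- Dimension shifting: `Tor₁(N, F)` is the kernel of `N ⊗ K → N ⊗ P₀`, where the first syzygy `K`
is encoded as the range of `P₁ → P₀`. -/
noncomputable def torOneEquivKer (N : Type u) [AddCommGroup N] [Module R N] :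
    ((Tor (ModuleCat.{u} R) 1).obj (ModuleCat.of R N)).obj F ≃ₗ[R]
      LinearMap.ker ((LinearMap.range (P.complex.d 1 0).hom).subtype.lTensor N) :=
  let d := (P.complex.d 1 0).hom
  let T := (MonoidalCategory.tensoringLeft (ModuleCat.{u} R)).obj (ModuleCat.of R N)
  let C := (T.mapHomologicalComplex _).obj P.complex
  let e : ((Tor (ModuleCat.{u} R) 1).obj (ModuleCat.of R N)).obj F ≅ (C.sc' 2 1 0).homology :=
    P.isoLeftDerivedObj T 1 ≪≫ ShortComplex.homologyMapIso (C.isoSc' 2 1 0 (by simp) (by simp))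
  have hexact : Function.Exact (P.complex.d 2 1).hom d.rangeRestrict :=
    (LinearMap.range d).subtype_injective.comp_exact_iff_exact.mp <|
      (ShortComplex.ShortExact.moduleCat_exact_iff_function_exact _).mp (P.exact_succ 0)
  e.toLinearEquiv ≪≫ₗ homologyEquivKer (C.sc' 2 1 0)
    (q := d.rangeRestrict.lTensor N) (i := (LinearMap.range d).subtype.lTensor N)
    (lTensor_exact N hexact d.surjective_rangeRestrict)
    (LinearMap.lTensor_surjective N d.surjective_rangeRestrict)
    (LinearMap.lTensor_comp N _ _).symm

theorem isAlmostFlat_iff_isAlmostPure_syzygy (m : Ideal R) :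
    IsAlmostFlat m F ↔ IsAlmostPure m (LinearMap.range (P.complex.d 1 0).hom).subtype := by
  refine forall₃_congr fun N _ _ ↦ forall₂_congr fun s _ ↦ ?_
  rw [← Module.mem_annihilator, (torOneEquivKer P N).annihilator_eq, Module.mem_annihilator,
    Subtype.forall]
  simp only [Subtype.ext_iff, Submodule.coe_smul, Submodule.coe_zero]

end Tor

theorem almostFlat_iff_ses_almostPure_general {R : Type u} [CommRing R] (m : Ideal R)
    (F : Type u) [AddCommGroup F] [Module R F] :
    IsAlmostFlat m F ↔
      (∀ (A B : Type u) [AddCommGroup A] [Module R A] [AddCommGroup B] [Module R B],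
        ∀ (i : A →ₗ[R] B) (p : B →ₗ[R] F),
          Function.Injective i → Function.Surjective p →
            LinearMap.range i = LinearMap.ker p → IsAlmostPure m i) := by
  let P := ProjectiveResolution.of (ModuleCat.of R F)
  let K := LinearMap.range (P.complex.d 1 0).hom
  let ε : P.complex.X 0 →ₗ[R] F := (P.π.f 0).hom
  have hε : Function.Surjective ε := (ModuleCat.epi_iff_surjective (P.π.f 0)).mp inferInstance
  have hdε : Function.Exact (P.complex.d 1 0).hom ε :=
    (ShortComplex.ShortExact.moduleCat_exact_iff_function_exact _).mp P.exact₀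
  have hK : LinearMap.range K.subtype = LinearMap.ker ε :=
    K.range_subtype.trans hdε.linearMap_ker_eq.symm
  have : Module.Projective R (P.complex.X 0) :=
    (IsProjective.iff_projective _).mpr (P.projective 0)
  rw [show IsAlmostFlat m F ↔ _ from isAlmostFlat_iff_isAlmostPure_syzygy P m]
  constructor
  · intro hpure A B _ _ _ _ i p hi hp hip
    exact hpure.of_projective_presentation (LinearMap.exact_iff.mpr hK.symm) hε hi
      (LinearMap.exact_iff.mpr hip.symm) hp
  · intro hpure
    exact hpure K (P.complex.X 0) K.subtype ε K.subtype_injective hε hK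

/-- A module `F` is almost flat iff every short exact sequence
`0 → A → B → F → 0` is almost pure. -/
theorem almostFlat_iff_ses_almostPure
    {R : Type u} [CommRing R] (m : Ideal R) (hm : m * m = m)
    (F : Type u) [AddCommGroup F] [Module R F] :
    IsAlmostFlat m F ↔
      (∀ (A B : Type u) [AddCommGroup A] [Module R A] [AddCommGroup B] [Module R B],
        ∀ (i : A →ₗ[R] B) (p : B →ₗ[R] F),
          Function.Injective i → Function.Surjective p →
            LinearMap.range i = LinearMap.ker p → IsAlmostPure m i) :=
  almostFlat_iff_ses_almostPure_general m F
end
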